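/- arXiv:0909.1031 — 2 statements merged into one kernel-verified Lean document; each statement's English description precedes it below -/
import Mathlib

section
/- Let k be an algebraically closed field of characteristic p > 0, G a finite group, and V a finitely generated kG-module such that End̲_{kG}(V) ≅ k (i.e., every kG-module endomorphism of V is the sum of a scalar multiple of the identity and an endomorphism factoring through a projective kG-module). Let R be a complete local commutative Noetherian ring with residue field k, and let (M, φ) and (M', φ') be lifts of V over R. If M and M' are isomorphic as RG-modules, then there exists an RG-module isomorphism h : M → M' satisfying φ' ∘ (k ⊗_R h) = φ; that is, (M, φ) and (M', φ') define the same deformation of V over R. -/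
/-!
The comparison `f = φ ∘ (k ⊗ e)⁻¹ ∘ φ'⁻¹` is a `kG`-automorphism of `V`, and it suffices to lift it
to an `RG`-automorphism `u` of `M`: then `h = e ∘ u` is the required isomorphism. By hypothesis
`f = c • id + t` with `t` factoring through a projective module. By Higman's criterion
(`FactorsThroughProjective.exists_relTrace`), `t = ∑ g, g β g⁻¹` for some merely `k`-linear `β`.
As `M` is free over `R`, `β` lifts to an `R`-linear `B`, and `c` lifts to some `r : R`, so that
`u = r • id + ∑ g, g B g⁻¹` is an `RG`-linear lift of `f` (`Lift.exists_equivariant_lift`). It is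
surjective by Nakayama's lemma (`surjective_of_residue`), hence bijective, since `M` is finitely
generated over a commutative ring.
-/

open TensorProduct

/-- A bundled `R`-linear representation of `G`. -/
structure RepM (R G : Type) [CommRing R] [Group G] : Type 1 where
  carrier : Type
  [isAddCommGroup : AddCommGroup carrier]
  [isModule : Module R carrier]
  ρ : Representation R G carrier

attribute [instance] RepM.isAddCommGroup RepM.isModule

/-- A map of `R[G]`-modules factors through a projective `R[G]`-module. -/
def FactorsThroughProjective (R G : Type) [CommRing R] [Group G] {M N : Type}
    [AddCommGroup M] [Module R M] [AddCommGroup N] [Module R N]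
    (ρM : Representation R G M) (ρN : Representation R G N) (f : M →ₗ[R] N) : Prop :=
  ∃ (P : RepM R G) (a : M →ₗ[R] P.carrier) (b : P.carrier →ₗ[R] N),
    Module.Projective (MonoidAlgebra R G) P.ρ.asModule ∧
    (∀ (g : G) (x : M), a (ρM g x) = P.ρ g (a x)) ∧
    (∀ (g : G) (y : P.carrier), b (P.ρ g y) = ρN g (b y)) ∧
    f = b ∘ₗ a

/-- `End̲_{kG}(V) ≅ k`: the stable endomorphism ring of `V` is isomorphic to `k`,
i.e. for every `kG`-endomorphism `f` of `V` there is a unique scalar `c` such that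
`f - c • id` factors through a projective `kG`-module. -/
def StableEndIsoK (k G : Type) [Field k] [Group G] {V : Type}
    [AddCommGroup V] [Module k V] (ρV : Representation k G V) : Prop :=
  ∀ f : V →ₗ[k] V, (∀ (g : G) (v : V), f (ρV g v) = ρV g (f v)) →
    ∃! c : k, FactorsThroughProjective k G ρV ρV (f - c • LinearMap.id)

/-- A lift of a `kG`-module `V` over a complete local commutative Noetherian ring `R`
with residue field `k`: a finitely generated `R[G]`-module which is free over `R`
together with a `kG`-module isomorphism `k ⊗_R M ≅ V`. -/
structure Lift (R k : Type) [CommRing R] [Field k] [Algebra R k]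
    (G : Type) [Group G] {V : Type} [AddCommGroup V] [Module k V]
    (ρV : Representation k G V) : Type 1 where
  carrier : Type
  [isAddCommGroup : AddCommGroup carrier]
  [isModule : Module R carrier]
  free : Module.Free R carrier
  finite : Module.Finite R carrier
  ρ : Representation R G carrier
  φ : (k ⊗[R] carrier) ≃ₗ[k] V
  equivariant : ∀ (g : G) (c : k) (x : carrier),
    φ (c ⊗ₜ (ρ g x)) = ρV g (φ (c ⊗ₜ x))

attribute [instance] Lift.isAddCommGroup Lift.isModule

/-- An object of the category `Ĉ` of complete local commutative Noetherian
`W₀`-algebras with residue field `k`. -/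
structure DefAlg (W₀ : Type) [CommRing W₀] (k : Type) [Field k] : Type 1 where
  R : Type
  [commRing : CommRing R]
  [isLocal : IsLocalRing R]
  [algBase : Algebra W₀ R]
  [algRes : Algebra R k]
  noetherian : IsNoetherianRing R
  complete : IsAdicComplete (IsLocalRing.maximalIdeal R) R
  residue_surjective : Function.Surjective (algebraMap R k)

attribute [instance] DefAlg.commRing DefAlg.isLocal DefAlg.algBase DefAlg.algRes

/-- A morphism in the category `Ĉ`: a local `W₀`-algebra homomorphism inducing the
identity on the residue field `k`. -/
@[ext]
structure DefAlgHom {W₀ : Type} [CommRing W₀] {k : Type} [Field k]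
    (A B : DefAlg W₀ k) : Type where
  hom : A.R →ₐ[W₀] B.R
  residue_compat : ∀ r : A.R, algebraMap B.R k (hom r) = algebraMap A.R k r

/-- `L'` is (isomorphic to) the lift obtained from `L` by base change along `α`. -/
def IsInducedLift {W₀ : Type} [CommRing W₀] {k : Type} [Field k]
    {G : Type} [Group G] {V : Type} [AddCommGroup V] [Module k V]
    {ρV : Representation k G V} {A B : DefAlg W₀ k} (α : DefAlgHom A B)
    (L : Lift A.R k G ρV) (L' : Lift B.R k G ρV) : Prop :=
  letI : Algebra A.R B.R := α.hom.toRingHom.toAlgebra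
  ∃ ψ : (B.R ⊗[A.R] L.carrier) →ₗ[B.R] L'.carrier,
    Function.Bijective ψ ∧
    (∀ (g : G) (b : B.R) (x : L.carrier), ψ (b ⊗ₜ (L.ρ g x)) = L'.ρ g (ψ (b ⊗ₜ x))) ∧
    (∀ (c : k) (b : B.R) (x : L.carrier),
      L'.φ (c ⊗ₜ ψ (b ⊗ₜ x)) = L.φ ((c * algebraMap B.R k b) ⊗ₜ x))

/-- `A` (together with some lift) is a universal deformation ring of the
`kG`-module `V`. -/
def IsUniversalDeformationRing (W₀ : Type) [CommRing W₀] (k : Type) [Field k]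
    (G : Type) [Group G] {V : Type} [AddCommGroup V] [Module k V]
    (ρV : Representation k G V) (A : DefAlg W₀ k) : Prop :=
  ∃ U : Lift A.R k G ρV,
    ∀ (B : DefAlg W₀ k) (L : Lift B.R k G ρV),
      ∃! α : DefAlgHom A B, IsInducedLift α U L

/-- The relative trace `∑ g, g ∘ β ∘ g⁻¹` of an `R`-linear endomorphism `β` of a
representation, an `R[G]`-linear endomorphism. -/
noncomputable def relTrace {R G M : Type} [CommRing R] [Group G] [Fintype G]
    [AddCommGroup M] [Module R M] (ρ : Representation R G M) (β : M →ₗ[R] M) : M →ₗ[R] M :=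
  ∑ g : G, ρ g ∘ₗ β ∘ₗ ρ g⁻¹

theorem relTrace_apply {R G M : Type} [CommRing R] [Group G] [Fintype G]
    [AddCommGroup M] [Module R M] (ρ : Representation R G M) (β : M →ₗ[R] M) (x : M) :
    relTrace ρ β x = ∑ g : G, ρ g (β (ρ g⁻¹ x)) := by
  simp [relTrace, LinearMap.sum_apply]

theorem relTrace_equivariant {R G M : Type} [CommRing R] [Group G] [Fintype G]
    [AddCommGroup M] [Module R M] (ρ : Representation R G M) (β : M →ₗ[R] M) (g : G) (x : M) :
    relTrace ρ β (ρ g x) = ρ g (relTrace ρ β x) := by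
  rw [relTrace_apply, relTrace_apply, map_sum]
  refine Fintype.sum_equiv (Equiv.mulLeft g⁻¹) _ _ fun h => ?_
  simp only [Equiv.coe_mulLeft, ← Module.End.mul_apply, ← map_mul, ← mul_assoc]
  simp

/-- One half of Higman's criterion: the identity of a projective `k[G]`-module is the relative
trace of a `k`-linear endomorphism. -/
theorem exists_relTrace_eq_id {k G P : Type} [CommRing k] [Group G] [Fintype G]
    [AddCommGroup P] [Module k P] (ρ : Representation k G P)
    (hP : Module.Projective (MonoidAlgebra k G) ρ.asModule) :
    ∃ θ : P →ₗ[k] P, ∀ y, relTrace ρ θ y = y := by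
  obtain ⟨s, hs⟩ := hP.out
  -- `θ` sends `y = ∑ q, a q • q`, with coefficients `a q` given by the section `s`, to
  -- `∑ q, (a q) 1 • q`, where `(a q) 1` is the coefficient at `1 : G`.
  let ev : (ρ.asModule →₀ MonoidAlgebra k G) →ₗ[k] P :=
    Finsupp.lsum k fun q : ρ.asModule =>
      ({ toFun := fun a => a.coeff 1 • ρ.asModuleEquiv q
         map_add' := fun a b => by simp [add_smul]
         map_smul' := fun c a => by simp [mul_smul] } : MonoidAlgebra k G →ₗ[k] P)
  have hev : ∀ w, ev w = w.sum fun q a => a.coeff 1 • ρ.asModuleEquiv q := fun w => by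
    simp only [ev, Finsupp.lsum_apply]; rfl
  have key : ∀ w : ρ.asModule →₀ MonoidAlgebra k G,
      ∑ g : G, ρ g (ev (MonoidAlgebra.of k G g⁻¹ • w)) =
        ρ.asModuleEquiv (Finsupp.linearCombination (MonoidAlgebra k G) id w) := by
    intro w
    induction w using Finsupp.induction_linear with
    | zero => simp
    | add v w hv hw => simp only [smul_add, map_add, Finset.sum_add_distrib, hv, hw]
    | single q a =>
      simp only [Finsupp.smul_single, hev, Finsupp.linearCombination_single, id]
      simp only [Finsupp.sum_single_index, MonoidAlgebra.coeff_zero, Finsupp.coe_zero,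
        Pi.zero_apply, zero_smul, smul_eq_mul, MonoidAlgebra.of_apply,
        MonoidAlgebra.coeff_single_mul_apply, inv_inv, mul_one, one_mul, map_smul,
        Representation.asModuleEquiv_map_smul]
      rw [Representation.asAlgebraHom_def, MonoidAlgebra.lift_apply, Finsupp.sum_fintype _ _ (by simp)]
      simp [LinearMap.sum_apply]
  refine ⟨ev ∘ₗ (s.restrictScalars k) ∘ₗ ρ.asModuleEquiv.symm.toLinearMap, fun y => ?_⟩
  rw [relTrace_apply]
  have h := key (s (ρ.asModuleEquiv.symm y))
  rw [hs] at h
  rw [LinearEquiv.apply_symm_apply] at h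
  refine (Finset.sum_congr rfl fun g _ => ?_).trans h
  simp only [LinearMap.comp_apply, LinearEquiv.coe_coe, LinearMap.coe_restrictScalars]
  rw [Representation.asModuleEquiv_symm_map_rho, map_smul]

/-- A map that factors through a projective `k[G]`-module is a relative trace. -/
theorem FactorsThroughProjective.exists_relTrace {k G V : Type} [CommRing k] [Group G] [Fintype G]
    [AddCommGroup V] [Module k V] (ρ : Representation k G V) {f : V →ₗ[k] V}
    (hf : FactorsThroughProjective k G ρ ρ f) : ∃ β : V →ₗ[k] V, f = relTrace ρ β := by
  obtain ⟨P, a, b, hP, ha, hb, rfl⟩ := hf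
  obtain ⟨θ, hθ⟩ := exists_relTrace_eq_id P.ρ hP
  refine ⟨b ∘ₗ θ ∘ₗ a, LinearMap.ext fun x => ?_⟩
  rw [LinearMap.comp_apply, ← hθ (a x), relTrace_apply, relTrace_apply, map_sum]
  simp [ha, hb]

/-- Nakayama's lemma for an endomorphism of a finitely generated module: surjectivity can be
tested after tensoring with the residue field. -/
theorem surjective_of_residue {R k M : Type} [CommRing R] [IsLocalRing R] [Field k] [Algebra R k]
    (hres : Function.Surjective (algebraMap R k)) [AddCommGroup M] [Module R M]
    [Module.Finite R M] (u : M →ₗ[R] M)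
    (hu : ∀ z : k ⊗[R] M, ∃ x, (1 : k) ⊗ₜ[R] u x = z) : Function.Surjective u := by
  have hker : RingHom.ker (algebraMap R k) = IsLocalRing.maximalIdeal R :=
    IsLocalRing.eq_maximalIdeal (RingHom.ker_isMaximal_of_surjective _ hres)
  let E0 : k ≃ₐ[R] IsLocalRing.ResidueField R :=
    (Ideal.quotientKerAlgEquivOfSurjective (f := Algebra.ofId R k) hres).symm.trans
      (Ideal.quotientEquivAlgOfEq R hker)
  let E : k ⊗[R] M ≃ₗ[R] IsLocalRing.ResidueField R ⊗[R] M :=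
    TensorProduct.congr E0.toLinearEquiv (LinearEquiv.refl R M)
  rw [← LinearMap.range_eq_top, ← IsLocalRing.map_tensorProduct_mk_eq_top, eq_top_iff]
  intro z _
  obtain ⟨x, hx⟩ := hu (E.symm z)
  refine ⟨u x, ⟨x, rfl⟩, ?_⟩
  have h : E ((1 : k) ⊗ₜ[R] u x) = z := by rw [hx, E.apply_symm_apply]
  rw [← h]
  simp [E]

/-- Every `k`-linear endomorphism of the reduction of a free `R`-module lifts to `R`. -/
theorem Lift.exists_lift_end {R k G V : Type} [CommRing R] [Field k] [Algebra R k] [Group G]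
    [AddCommGroup V] [Module k V] {ρV : Representation k G V}
    (hres : Function.Surjective (algebraMap R k)) (L : Lift R k G ρV) (β : V →ₗ[k] V) :
    ∃ B : L.carrier →ₗ[R] L.carrier, ∀ x, L.φ (1 ⊗ₜ B x) = β (L.φ (1 ⊗ₜ x)) := by
  have := L.free
  let β' : k ⊗[R] L.carrier →ₗ[R] k ⊗[R] L.carrier :=
    (L.φ.symm.toLinearMap ∘ₗ β ∘ₗ L.φ.toLinearMap).restrictScalars R
  obtain ⟨B, hB⟩ := Module.projective_lifting_property (TensorProduct.mk R k L.carrier 1)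
    (β' ∘ₗ TensorProduct.mk R k L.carrier 1) (TensorProduct.mk_surjective _ _ _ hres)
  refine ⟨B, fun x => ?_⟩
  have h : (1 : k) ⊗ₜ[R] B x = L.φ.symm (β (L.φ (1 ⊗ₜ x))) := LinearMap.congr_fun hB x
  rw [h, LinearEquiv.apply_symm_apply]

/-- If every endomorphism of `V` is stably a scalar, then every equivariant endomorphism of `V`
lifts to an equivariant endomorphism of any lift of `V`. -/
theorem Lift.exists_equivariant_lift {R k G V : Type} [CommRing R] [Field k] [Algebra R k]
    [Group G] [Finite G] [AddCommGroup V] [Module k V] {ρV : Representation k G V}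
    (hstable : StableEndIsoK k G ρV)
    (hres : Function.Surjective (algebraMap R k)) (L : Lift R k G ρV) (f : V →ₗ[k] V)
    (hf : ∀ (g : G) (v : V), f (ρV g v) = ρV g (f v)) :
    ∃ u : L.carrier →ₗ[R] L.carrier, (∀ g x, u (L.ρ g x) = L.ρ g (u x)) ∧
      ∀ x, L.φ (1 ⊗ₜ u x) = f (L.φ (1 ⊗ₜ x)) := by
  cases nonempty_fintype G
  obtain ⟨c, hc, -⟩ := hstable f hf
  obtain ⟨β, hβ⟩ := FactorsThroughProjective.exists_relTrace ρV hc
  obtain ⟨B, hB⟩ := L.exists_lift_end hres β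
  obtain ⟨r, rfl⟩ := hres c
  refine ⟨r • LinearMap.id + relTrace L.ρ B, fun g x => ?_, fun x => ?_⟩
  · simp [relTrace_equivariant]
  · have h : f (L.φ (1 ⊗ₜ x)) =
        algebraMap R k r • L.φ (1 ⊗ₜ x) + relTrace ρV β (L.φ (1 ⊗ₜ x)) := by
      rw [← hβ]; simp
    rw [h, relTrace_apply, LinearMap.add_apply, relTrace_apply, TensorProduct.tmul_add, map_add,
      TensorProduct.tmul_sum, map_sum]
    congr 1
    · rw [← map_smul, LinearMap.smul_apply, LinearMap.id_apply, TensorProduct.tmul_smul,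
        algebraMap_smul]
    · simp only [L.equivariant, hB]

/-
STATEMENT 3:
Let k be an algebraically closed field of characteristic p > 0, G a finite group,
and V a finitely generated kG-module such that End̲_{kG}(V) ≅ k. Let R be a
complete local commutative Noetherian ring with residue field k, and let (M, φ) and
(M', φ') be lifts of V over R. If M and M' are isomorphic as RG-modules, then there
exists an RG-module isomorphism h : M → M' satisfying φ' ∘ (k ⊗_R h) = φ; that is,
(M, φ) and (M', φ') define the same deformation of V over R.
-/
theorem stmt3 (p : ℕ) (hp : 0 < p) (k : Type) [Field k] [IsAlgClosed k] [CharP k p]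
    (G : Type) [Group G] [Finite G]
    (V : Type) [AddCommGroup V] [Module k V] [Module.Finite k V]
    (ρV : Representation k G V)
    (hstable : StableEndIsoK k G ρV)
    (R : Type) [CommRing R] [IsLocalRing R] [IsNoetherianRing R]
    [IsAdicComplete (IsLocalRing.maximalIdeal R) R]
    [Algebra R k] (hres : Function.Surjective (algebraMap R k))
    (L L' : Lift R k G ρV)
    (e : L.carrier ≃ₗ[R] L'.carrier)
    (he : ∀ (g : G) (x : L.carrier), e (L.ρ g x) = L'.ρ g (e x)) :
    ∃ h : L.carrier ≃ₗ[R] L'.carrier,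
      (∀ (g : G) (x : L.carrier), h (L.ρ g x) = L'.ρ g (h x)) ∧
      ∀ (c : k) (x : L.carrier), L'.φ (c ⊗ₜ h x) = L.φ (c ⊗ₜ x) := by
  have := L.finite
  let F : k ⊗[R] L.carrier ≃ₗ[k] k ⊗[R] L'.carrier := e.baseChange R k _ _
  have hF : ∀ (c : k) x, F (c ⊗ₜ x) = c ⊗ₜ e x := fun c x => by simp [F]
  -- The discrepancy between `φ` and `φ' ∘ (k ⊗ e)`, as an automorphism of `V`.
  let f : V ≃ₗ[k] V := L'.φ.symm ≪≫ₗ F.symm ≪≫ₗ L.φ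
  have hf : ∀ x : L.carrier, f (L'.φ (1 ⊗ₜ e x)) = L.φ (1 ⊗ₜ x) := fun x => by
    simp [f, ← hF]
  have hfG : ∀ (g : G) (v : V), f (ρV g v) = ρV g (f v) := by
    intro g v
    obtain ⟨y, hy⟩ := TensorProduct.mk_surjective R L'.carrier k hres (L'.φ.symm v)
    obtain ⟨x, rfl⟩ := e.surjective y
    obtain rfl : L'.φ (1 ⊗ₜ e x) = v := by
      rw [← L'.φ.apply_symm_apply v, ← hy]; rfl
    rw [← L'.equivariant, ← he, hf, hf, L.equivariant]
  obtain ⟨u, huG, hu⟩ := L.exists_equivariant_lift hstable hres f.toLinearMap hfG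
  have hsurj : Function.Surjective u := by
    refine surjective_of_residue hres u fun z => ?_
    obtain ⟨x, hx⟩ := TensorProduct.mk_surjective R L.carrier k hres (L.φ.symm (f.symm (L.φ z)))
    refine ⟨x, L.φ.injective ?_⟩
    have hx' : (1 : k) ⊗ₜ[R] x = L.φ.symm (f.symm (L.φ z)) := hx
    rw [hu, hx']
    simp
  let U : L.carrier ≃ₗ[R] L.carrier :=
    LinearEquiv.ofBijective u (OrzechProperty.bijective_of_surjective_endomorphism u hsurj)
  have hU : ∀ x, U x = u x := fun x => rfl
  have h1 : ∀ x, L'.φ (1 ⊗ₜ e (u x)) = L.φ (1 ⊗ₜ x) := fun x => by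
    apply f.injective
    rw [hf, hu]; rfl
  refine ⟨U ≪≫ₗ e, fun g x => ?_, fun c x => ?_⟩
  · simp only [LinearEquiv.trans_apply, hU, huG, he]
  · have hc : ∀ {N : Type} [AddCommGroup N] [Module R N] (y : N),
        c ⊗ₜ[R] y = c • ((1 : k) ⊗ₜ[R] y) := fun y => by
      rw [TensorProduct.smul_tmul', smul_eq_mul, mul_one]
    rw [LinearEquiv.trans_apply, hU, hc, hc x, map_smul, map_smul, h1]
end

section
/- Let k be an algebraically closed field of characteristic p > 0, W the ring of p-typical Witt vectors over k, and G a finite group. Let α : A → A₀ be a surjective local W-algebra homomorphism between commutative Artinian local W-algebras with residue field k. Let M be a finitely generated A[G]-module which is free as an A-module, and set M₀ = A₀ ⊗_{A,α} M. Then every A₀[G]-module endomorphism u₀ of M₀ which factors through a projective A₀[G]-module can be lifted to an A[G]-module endomorphism u of M which factors through a projective A[G]-module (i.e., u induces u₀ after applying A₀ ⊗_{A,α} −). -/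
/-!
The proof is Higman's criterion over a commutative coefficient ring. For an `R`-linear map
`v : V → W` between representations of the finite group `G`, put `Tr v = ∑ g, g v g⁻¹`, which is
always equivariant.

* `exists_repTrace_eq`: an equivariant map factoring through a projective `R[G]`-module is `Tr v`
  for some `R`-linear `v`. It suffices to write the identity of a projective module `P` as a trace.
  Split the surjection from the free `R[G]`-module on the set `P` onto `P`; on the free module the
  identity is the trace of the projection onto the coefficients at `1 : G`.
* `factorsThroughProjective_repTrace`: if `W` is free over `R`, then `Tr v` factors through a free
  `R[G]`-module, namely the one on an `R`-basis of `W`.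

Traces commute with base change, so lifting `u₀ = Tr v₀` amounts to lifting the `A₀`-linear map `v₀`
to an `A`-linear `v : M → M`. This is possible because `M` is projective over `A` and
`M → A₀ ⊗ M` is surjective; then `u = Tr v`.
-/

open TensorProduct

/-- The base change of a representation along an algebra map. -/
noncomputable def repBaseChange {R : Type} [CommRing R] (S : Type) [CommRing S] [Algebra R S]
    {G M : Type} [Group G] [AddCommGroup M] [Module R M] (ρ : Representation R G M) :
    Representation S G (S ⊗[R] M) where
  toFun g := LinearMap.baseChange S (ρ g)
  map_one' := by ext m; simp
  map_mul' g h := by ext m; simp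

section Higman

variable {R G : Type} [CommRing R] [Group G]

/-- The projection of the free `R[G]`-module on the set `P` onto the coefficients at `1 : G`,
followed by the evaluation of formal `R`-linear combinations in `P`. -/
noncomputable def coeffOneEval (P : Type) [AddCommGroup P] [Module R P] :
    (P →₀ MonoidAlgebra R G) →ₗ[R] P :=
  Finsupp.lsum R fun x ↦ LinearMap.toSpanSingleton R P x ∘ₗ Finsupp.lapply 1 ∘ₗ
    (MonoidAlgebra.coeffLinearEquiv R).toLinearMap

open Classical in
theorem coeffOneEval_single_single {P : Type} [AddCommGroup P] [Module R P] (x : P) (h : G)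
    (r : R) : coeffOneEval P (Finsupp.single x (MonoidAlgebra.single h r)) =
      if h = 1 then r • x else 0 := by
  simp [coeffOneEval, Finsupp.single_apply, ite_smul]

variable [Fintype G] {V W X : Type} [AddCommGroup V] [Module R V] [AddCommGroup W] [Module R W]
  [AddCommGroup X] [Module R X]

/-- The trace `∑ g, g v g⁻¹` of an `R`-linear map `v` between representations of `G`. -/
noncomputable def repTrace (ρ : Representation R G V) (σ : Representation R G W)
    (v : V →ₗ[R] W) : V →ₗ[R] W :=
  ∑ g, σ g ∘ₗ v ∘ₗ ρ g⁻¹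

theorem repTrace_apply (ρ : Representation R G V) (σ : Representation R G W)
    (v : V →ₗ[R] W) (x : V) : repTrace ρ σ v x = ∑ g, σ g (v (ρ g⁻¹ x)) := by
  simp [repTrace, LinearMap.sum_apply]

theorem repTrace_equivariant (ρ : Representation R G V) (σ : Representation R G W)
    (v : V →ₗ[R] W) (g : G) (x : V) :
    repTrace ρ σ v (ρ g x) = σ g (repTrace ρ σ v x) := by
  simp only [repTrace_apply, map_sum]
  refine Fintype.sum_equiv (Equiv.mulLeft g⁻¹) _ _ fun h ↦ ?_
  simp only [Equiv.coe_mulLeft, ← Module.End.mul_apply, ← map_mul]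
  simp

theorem comp_repTrace (ρ : Representation R G V) (σ : Representation R G W)
    (τ : Representation R G X) (v : V →ₗ[R] W) (b : W →ₗ[R] X)
    (hb : ∀ (g : G) (y : W), b (σ g y) = τ g (b y)) :
    b ∘ₗ repTrace ρ σ v = repTrace ρ τ (b ∘ₗ v) := by
  ext x
  simp [repTrace_apply, map_sum, hb]

theorem repTrace_comp (ρ : Representation R G V) (σ : Representation R G W)
    (τ : Representation R G X) (v : W →ₗ[R] X) (a : V →ₗ[R] W)
    (ha : ∀ (g : G) (x : V), a (ρ g x) = σ g (a x)) :
    repTrace σ τ v ∘ₗ a = repTrace ρ τ (v ∘ₗ a) := by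
  ext x
  simp [repTrace_apply, ha]

/-- The trace of `coeffOneEval` is the evaluation of formal `R[G]`-linear combinations. -/
theorem sum_coeffOneEval (ρ : Representation R G V) (y : ρ.asModule →₀ MonoidAlgebra R G) :
    ∑ g : G, ρ g (ρ.asModuleEquiv
      (coeffOneEval ρ.asModule ((MonoidAlgebra.single g⁻¹ (1 : R) : MonoidAlgebra R G) • y))) =
      ρ.asModuleEquiv (Finsupp.linearCombination (MonoidAlgebra R G) id y) := by
  classical
  induction y using Finsupp.induction_linear with
  | zero => simp
  | add y z hy hz => simp only [smul_add, map_add, Finset.sum_add_distrib, hy, hz]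
  | single x c =>
    induction c using MonoidAlgebra.induction_linear with
    | zero => simp
    | add c d hc hd =>
      simp only [Finsupp.single_add, smul_add, map_add, Finset.sum_add_distrib, hc, hd]
    | single h r =>
      -- only the term `g = h` contributes
      simp only [Finsupp.smul_single, smul_eq_mul, MonoidAlgebra.single_mul_single, one_mul,
        coeffOneEval_single_single, inv_mul_eq_one]
      rw [Finset.sum_eq_single h (fun g _ hg ↦ by simp [hg]) (by simp)]
      simp [Representation.asModuleEquiv_map_smul, Representation.asAlgebraHom_single,
        -Representation.single_smul]

/-- The identity of a projective `R[G]`-module is a trace. -/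
theorem exists_repTrace_eq_id (ρ : Representation R G V)
    (h : Module.Projective (MonoidAlgebra R G) ρ.asModule) :
    ∃ v : V →ₗ[R] V, repTrace ρ ρ v = LinearMap.id := by
  obtain ⟨s, hs⟩ := Module.projective_def'.1 h
  refine ⟨ρ.asModuleEquiv.toLinearMap ∘ₗ coeffOneEval ρ.asModule ∘ₗ
    s.restrictScalars R ∘ₗ ρ.asModuleEquiv.symm.toLinearMap, ?_⟩
  ext x
  have key := sum_coeffOneEval ρ (s (ρ.asModuleEquiv.symm x))
  have hsx := LinearMap.congr_fun hs (ρ.asModuleEquiv.symm x)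
  simp only [LinearMap.comp_apply, LinearMap.id_apply] at hsx
  rw [hsx, LinearEquiv.apply_symm_apply] at key
  simp only [repTrace_apply, LinearMap.comp_apply, LinearMap.id_apply, LinearEquiv.coe_coe,
    LinearMap.restrictScalars_apply, Representation.asModuleEquiv_symm_map_rho, map_smul]
  exact key

theorem exists_repTrace_eq (ρ : Representation R G V) (σ : Representation R G W)
    (f : V →ₗ[R] W) (hf : FactorsThroughProjective R G ρ σ f) :
    ∃ v : V →ₗ[R] W, repTrace ρ σ v = f := by
  obtain ⟨P, a, b, hP, ha, hb, rfl⟩ := hf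
  obtain ⟨w, hw⟩ := exists_repTrace_eq_id P.ρ hP
  refine ⟨b ∘ₗ w ∘ₗ a, ?_⟩
  rw [← comp_repTrace ρ P.ρ σ _ b hb, ← repTrace_comp ρ P.ρ P.ρ _ a ha, hw, LinearMap.id_comp]

theorem factorsThroughProjective_repTrace [Module.Free R W] (ρ : Representation R G V)
    (σ : Representation R G W) (v : V →ₗ[R] W) :
    FactorsThroughProjective R G ρ σ (repTrace ρ σ v) := by
  let e := Module.Free.chooseBasis R W
  let F := Representation.free R G (Module.Free.ChooseBasisIndex R W)
  let b := Representation.freeLift σ e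
  -- an `R`-linear section of `b`, placing basis vectors in the component of `1 : G`
  let c : W →ₗ[R] (Module.Free.ChooseBasisIndex R W →₀ MonoidAlgebra R G) :=
    e.constr R fun i ↦ Finsupp.single i (MonoidAlgebra.single 1 1)
  have hbc : b.toLinearMap ∘ₗ c = LinearMap.id := by
    refine e.ext fun i ↦ ?_
    simp only [LinearMap.comp_apply, c, e.constr_basis, LinearMap.id_apply]
    exact (Representation.freeLift_single_single σ i 1 1 e).trans (by simp)
  refine ⟨⟨_, F⟩, repTrace ρ F (c ∘ₗ v), b.toLinearMap, ?_, repTrace_equivariant ρ F _,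
    b.isIntertwining, ?_⟩
  · have := Representation.free_asModule_free R G (Module.Free.ChooseBasisIndex R W)
    exact Module.Projective.of_free
  · rw [comp_repTrace ρ F σ _ b.toLinearMap b.isIntertwining, ← LinearMap.comp_assoc, hbc,
      LinearMap.id_comp]

theorem baseChange_repTrace (S : Type) [CommRing S] [Algebra R S] (ρ : Representation R G V)
    (σ : Representation R G W) (v : V →ₗ[R] W) :
    (repTrace ρ σ v).baseChange S =
      repTrace (repBaseChange S ρ) (repBaseChange S σ) (v.baseChange S) := by
  ext x
  simp [repTrace_apply, repBaseChange, TensorProduct.tmul_sum]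

end Higman

/-- Along a surjection `R → S`, every `S`-linear map between base changes of `R`-modules with
projective source lifts to an `R`-linear map. -/
theorem exists_baseChange_eq {R S V W : Type} [CommRing R] [CommRing S] [Algebra R S]
    (hS : Function.Surjective (algebraMap R S)) [AddCommGroup V] [Module R V]
    [Module.Projective R V] [AddCommGroup W] [Module R W] (f : S ⊗[R] V →ₗ[S] S ⊗[R] W) :
    ∃ v : V →ₗ[R] W, v.baseChange S = f := by
  obtain ⟨v, hv⟩ := Module.projective_lifting_property (TensorProduct.mk R S W 1)
    (f.restrictScalars R ∘ₗ TensorProduct.mk R S V 1) (TensorProduct.mk_surjective R W S hS)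
  refine ⟨v, ?_⟩
  ext x
  simpa using LinearMap.congr_fun hv x

/-
STATEMENT 4:
Let k be an algebraically closed field of characteristic p > 0, W the p-typical Witt
vectors over k, and G a finite group. Let α : A → A₀ be a surjective local W-algebra
homomorphism between commutative Artinian local W-algebras with residue field k.
Let M be a finitely generated A[G]-module which is free as an A-module, and set
M₀ = A₀ ⊗_{A,α} M. Then every A₀[G]-module endomorphism u₀ of M₀ which factors
through a projective A₀[G]-module can be lifted to an A[G]-module endomorphism u of
M which factors through a projective A[G]-module (i.e., u induces u₀ after applying
A₀ ⊗_{A,α} −).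
-/
theorem stmt4 (p : ℕ) [Fact p.Prime] (k : Type) [Field k] [IsAlgClosed k] [CharP k p]
    (G : Type) [Group G] [Finite G]
    (A : Type) [CommRing A] [IsArtinianRing A] [IsLocalRing A]
    [Algebra (WittVector p k) A] [Algebra A k]
    (hresA : Function.Surjective (algebraMap A k))
    (A₀ : Type) [CommRing A₀] [IsArtinianRing A₀] [IsLocalRing A₀]
    [Algebra (WittVector p k) A₀] [Algebra A₀ k]
    (hresA₀ : Function.Surjective (algebraMap A₀ k))
    (α : A →ₐ[WittVector p k] A₀) (hα : Function.Surjective α)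
    (hloc : IsLocalHom α.toRingHom)
    (M : Type) [AddCommGroup M] [Module A M] [Module.Finite A M] [Module.Free A M]
    (ρM : Representation A G M) :
    letI : Algebra A A₀ := α.toRingHom.toAlgebra
    ∀ u₀ : (A₀ ⊗[A] M) →ₗ[A₀] (A₀ ⊗[A] M),
      (∀ (g : G) (x : A₀ ⊗[A] M),
          u₀ (repBaseChange A₀ ρM g x) = repBaseChange A₀ ρM g (u₀ x)) →
      FactorsThroughProjective A₀ G (repBaseChange A₀ ρM) (repBaseChange A₀ ρM) u₀ →
      ∃ u : M →ₗ[A] M,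
        (∀ (g : G) (x : M), u (ρM g x) = ρM g (u x)) ∧
        FactorsThroughProjective A G ρM ρM u ∧
        LinearMap.baseChange A₀ u = u₀ := by
  intro u₀ _ h
  letI : Algebra A A₀ := α.toRingHom.toAlgebra
  have := Fintype.ofFinite G
  obtain ⟨v₀, rfl⟩ := exists_repTrace_eq _ _ u₀ h
  obtain ⟨v, rfl⟩ := exists_baseChange_eq hα v₀
  exact ⟨repTrace ρM ρM v, repTrace_equivariant ρM ρM v,
    factorsThroughProjective_repTrace ρM ρM v, baseChange_repTrace A₀ ρM ρM v⟩
end
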